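/- arXiv:2203.07592 — 2 statements merged into one kernel-verified Lean document; each statement's English description precedes it below -/
import Mathlib

section
/- Let G be a finite p-group and N a normal subgroup of G with N ≤ Φ(G). If N contains no abelian G-invariant subgroup isomorphic to C_p × C_p, then N is cyclic. -/
/-- `G` is a minimal non-abelian group: non-abelian, but all proper subgroups abelian. -/
def IsMinimalNonabelian (G : Type*) [Group G] : Prop :=
  (¬ ∀ a b : G, a * b = b * a) ∧
    ∀ H : Subgroup G, H ≠ ⊤ → ∀ a ∈ H, ∀ b ∈ H, a * b = b * a

/-- `G` is an `𝒜_t`-group: it has a non-abelian subgroup of index `p ^ (t-1)`,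
but all subgroups of index `p ^ t` are abelian. -/
def IsAGroup (p t : ℕ) (G : Type*) [Group G] : Prop :=
  (∃ H : Subgroup G, H.index = p ^ (t - 1) ∧ ¬ ∀ a ∈ H, ∀ b ∈ H, a * b = b * a) ∧
    ∀ H : Subgroup G, H.index = p ^ t → ∀ a ∈ H, ∀ b ∈ H, a * b = b * a

/-!
Suppose every normal subgroup of `G` of order `p ^ 2` inside `N` is cyclic. Conjugation embeds the
quotient of `G` by the centralizer of a cyclic normal subgroup `M` into `Aut M`; if `|M|` divides
`p ^ 2` this quotient has order dividing `p`, so the Frattini subgroup, and with it `N`,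
centralizes `M`.

If `N` is abelian and not cyclic, then `|Ω₁(N)| = |N : N ^ p| ≥ p ^ 2`, so `Ω₁(N)` contains a normal
subgroup of `G` of order `p ^ 2`, which has exponent `p` and so is not cyclic. In general, divide by
`Z ≤ N` normal of order `p`. A normal subgroup of order `p ^ 2` of `N / Z` is `K / Z` with
`|K| = p ^ 3`, and `K` has a subgroup of order `p ^ 2` normal in `G`, which is cyclic and hence
central in `K`; so `K` is abelian, thus cyclic by the abelian case. By induction `N / Z` is cyclic,
and since `Z` is central in `N`, the group `N` is abelian.
-/

open Subgroup

open scoped IsMulCommutative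

section Quotient

variable {G : Type*} [Group G]

theorem card_mul_card_map_mk' {M N : Subgroup G} [M.Normal] (hMN : M ≤ N) :
    Nat.card M * Nat.card (N.map (QuotientGroup.mk' M)) = Nat.card N := by
  rw [← relIndex_ker, QuotientGroup.ker_mk', ← relIndex_bot_left,
    relIndex_mul_relIndex ⊥ M N bot_le hMN, relIndex_bot_left]

theorem comap_mk'_le {M N : Subgroup G} [M.Normal] (hMN : M ≤ N) {E : Subgroup (G ⧸ M)}
    (hE : E ≤ N.map (QuotientGroup.mk' M)) : E.comap (QuotientGroup.mk' M) ≤ N :=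
  (comap_mono hE).trans (comap_map_eq_self (by rwa [QuotientGroup.ker_mk'])).le

theorem card_mul_card_comap_mk' (M : Subgroup G) [M.Normal] (E : Subgroup (G ⧸ M)) :
    Nat.card (E.comap (QuotientGroup.mk' M)) = Nat.card M * Nat.card E := by
  have hM : M ≤ E.comap (QuotientGroup.mk' M) :=
    (QuotientGroup.ker_mk' M).symm.trans_le (ker_le_comap _ _)
  rw [← card_mul_card_map_mk' hM, map_comap_eq_self_of_surjective (QuotientGroup.mk'_surjective M)]

theorem isMulCommutative_of_isCyclic_map_mk' {K M : Subgroup G} [M.Normal]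
    (hK : K ≤ centralizer (M : Set G)) (hcyc : IsCyclic (K.map (QuotientGroup.mk' M))) :
    IsMulCommutative K := by
  refine ((QuotientGroup.mk' M).subgroupMap K).isMulCommutative_of_isCyclic_of_ker_le_center ?_
  intro k hk
  have hkM : (k : G) ∈ M := (QuotientGroup.eq_one_iff _).1 (congrArg Subtype.val hk)
  exact mem_center_iff.2 fun l => Subtype.ext (mem_centralizer_iff.1 (hK l.2) k hkM).symm

end Quotient

section Frattini

variable {G : Type*} [Group G]

theorem isCoatom_of_prime_index {K : Subgroup G} (hK : K.index.Prime) : IsCoatom K := by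
  refine ⟨fun h => hK.ne_one (index_eq_one.2 h), fun L hKL => ?_⟩
  have hmul : K.relIndex L * L.index = K.index := relIndex_mul_index hKL.le
  rcases (Nat.dvd_prime hK).1 (Dvd.intro_left _ hmul) with hL | hL
  · exact index_eq_one.1 hL
  · rw [hL, Nat.mul_eq_right hK.ne_zero, relIndex_eq_one] at hmul
    exact absurd hmul hKL.not_ge

theorem frattini_le_of_index_dvd_prime {p : ℕ} (hp : p.Prime) {K : Subgroup G}
    (hK : K.index ∣ p) : frattini G ≤ K := by
  rcases (Nat.dvd_prime hp).1 hK with h | h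
  · exact le_top.trans (index_eq_one.1 h).ge
  · exact frattini_le_coatom (isCoatom_of_prime_index (h ▸ hp))

theorem ker_conjNormal (M : Subgroup G) [M.Normal] :
    (MulAut.conjNormal : G →* MulAut M).ker = centralizer (M : Set G) := by
  ext g
  simp only [MonoidHom.mem_ker, MulEquiv.ext_iff, Subtype.ext_iff, MulAut.conjNormal_apply,
    MulAut.one_apply, mul_inv_eq_iff_eq_mul, Subtype.forall, mem_centralizer_iff, SetLike.mem_coe]
  exact forall₂_congr fun _ _ => eq_comm

theorem index_centralizer_dvd_totient (M : Subgroup G) [M.Normal] [Finite M] [IsCyclic M] :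
    (centralizer (M : Set G)).index ∣ Nat.totient (Nat.card M) := by
  rw [← ker_conjNormal, index_ker, ← IsCyclic.card_mulAut]
  exact card_subgroup_dvd_card _

end Frattini

section PGroup

variable {p : ℕ} [hp : Fact p.Prime] {G : Type*} [Group G] [Finite G]

theorem nontrivial_inf_center (hG : IsPGroup p G) (N : Subgroup G) [N.Normal] [Nontrivial N] :
    Nontrivial (N ⊓ center G : Subgroup G) := by
  have hpN : p ∣ Nat.card N := (hG.to_subgroup N).card_eq_or_dvd.resolve_left
    Finite.one_lt_card.ne'
  obtain ⟨b, hb, hb1⟩ := (hG.of_equiv ConjAct.toConjAct)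
    |>.exists_fixed_point_of_prime_dvd_card_of_fixed_point N hpN (a := 1) fun g => smul_one g
  have hbc : (b : G) ∈ center G := by
    rw [← SetLike.mem_coe, ← ConjAct.fixedPoints_eq_center]
    intro g
    rw [← ConjAct.Subgroup.val_conj_smul, hb g]
  exact nontrivial_iff_exists_ne_one _ |>.2 ⟨b, ⟨b.2, hbc⟩, fun h => hb1 (Subtype.ext h.symm)⟩

theorem exists_normal_le_card_eq_prime (hG : IsPGroup p G) (N : Subgroup G) [N.Normal]
    [Nontrivial N] : ∃ Z ≤ N, Z.Normal ∧ Nat.card Z = p := by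
  have := nontrivial_inf_center hG N
  obtain ⟨c, hc⟩ := exists_prime_orderOf_dvd_card' p
    ((hG.to_subgroup (N ⊓ center G)).card_eq_or_dvd.resolve_left Finite.one_lt_card.ne')
  have hle : zpowers (c : G) ≤ N ⊓ center G := zpowers_le.2 c.2
  refine ⟨zpowers (c : G), hle.trans inf_le_left, ⟨fun z hz g => ?_⟩, ?_⟩
  · rwa [mem_center_iff.1 (hle hz).2 g, mul_inv_cancel_right]
  · rw [Nat.card_zpowers, orderOf_coe, hc]

theorem exists_normal_le_card_eq_prime_pow (hG : IsPGroup p G) (N : Subgroup G) [hN : N.Normal]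
    {k : ℕ} (hk : p ^ k ∣ Nat.card N) : ∃ M ≤ N, M.Normal ∧ Nat.card M = p ^ k := by
  induction k with
  | zero => exact ⟨⊥, bot_le, inferInstance, by rw [card_bot, pow_zero]⟩
  | succ k ih =>
    obtain ⟨M, hMN, hM, hMk⟩ := ih ((pow_dvd_pow p k.le_succ).trans hk)
    have hN' : (N.map (QuotientGroup.mk' M)).Normal := hN.map _ (QuotientGroup.mk'_surjective M)
    have hpN' : p ∣ Nat.card (N.map (QuotientGroup.mk' M)) := by
      rw [← card_mul_card_map_mk' hMN, hMk, pow_succ] at hk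
      exact Nat.dvd_of_mul_dvd_mul_left (pow_pos hp.out.pos k) hk
    have : Nontrivial (N.map (QuotientGroup.mk' M)) :=
      Finite.one_lt_card_iff_nontrivial.1 (hp.out.one_lt.trans_le (Nat.le_of_dvd Nat.card_pos hpN'))
    obtain ⟨Z, hZN, hZ, hZp⟩ := exists_normal_le_card_eq_prime (hG.to_quotient M)
      (N.map (QuotientGroup.mk' M))
    exact ⟨Z.comap (QuotientGroup.mk' M), comap_mk'_le hMN hZN, inferInstance,
      by rw [card_mul_card_comap_mk', hMk, hZp, pow_succ]⟩

theorem frattini_le_centralizer_of_card_dvd_prime_sq (hG : IsPGroup p G) (M : Subgroup G)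
    [M.Normal] [IsCyclic M] (hM : Nat.card M ∣ p ^ 2) :
    frattini G ≤ centralizer (M : Set G) := by
  apply frattini_le_of_index_dvd_prime hp.out
  obtain ⟨n, hn⟩ := hG.index (centralizer (M : Set G))
  have hdvd : p ^ n ∣ p * (p - 1) := by
    have := (index_centralizer_dvd_totient M).trans (Nat.totient_dvd_of_dvd hM)
    rwa [hn, Nat.totient_prime_pow_succ hp.out, pow_one] at this
  have hcop : (p ^ n).Coprime (p - 1) :=
    (Nat.coprime_self_sub_right hp.out.one_le |>.2 (Nat.coprime_one_right p)).pow_left n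
  exact hn ▸ hcop.dvd_of_dvd_mul_right hdvd

end PGroup

section Commutative

variable {p : ℕ} [hp : Fact p.Prime]

-- Writing `s = y ^ j * t ^ p` repeatedly in `x = y ^ k * s ^ p` pushes the second factor into
-- ever higher `p`-th powers, where it vanishes.
theorem isCyclic_of_isCyclic_quotient_range_powMonoidHom {A : Type*} [CommGroup A] [Finite A]
    (hA : IsPGroup p A) (hcyc : IsCyclic (A ⧸ (powMonoidHom p : A →* A).range)) : IsCyclic A := by
  obtain ⟨y', hy'⟩ := hcyc.exists_generator
  obtain ⟨y, rfl⟩ := QuotientGroup.mk_surjective y'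
  have hdecomp (x : A) : ∃ (k : ℤ) (s : A), x = y ^ k * s ^ p := by
    obtain ⟨k, hk⟩ := mem_zpowers_iff.1 (hy' x)
    obtain ⟨s, hs⟩ := QuotientGroup.eq.1 hk
    exact ⟨k, s, by rw [← powMonoidHom_apply, hs, mul_inv_cancel_left]⟩
  have hdecomp_pow (n : ℕ) (x : A) : ∃ (k : ℤ) (s : A), x = y ^ k * s ^ p ^ n := by
    induction n with
    | zero => exact ⟨0, x, by simp⟩
    | succ n ih =>
      obtain ⟨k, s, rfl⟩ := ih
      obtain ⟨j, t, rfl⟩ := hdecomp s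
      exact ⟨k + j * (p ^ n : ℕ), t, by
        rw [mul_pow, ← pow_mul, ← pow_succ', zpow_add, zpow_mul, zpow_natCast, mul_assoc]⟩
  obtain ⟨n, hn⟩ := IsPGroup.iff_card.1 hA
  refine ⟨y, fun x => ?_⟩
  obtain ⟨k, s, rfl⟩ := hdecomp_pow n x
  exact ⟨k, by rw [← hn, pow_card_eq_one', mul_one]⟩

theorem prime_sq_dvd_card_ker_powMonoidHom {A : Type*} [CommGroup A] [Finite A]
    (hA : IsPGroup p A) (hcyc : ¬ IsCyclic A) :
    p ^ 2 ∣ Nat.card (powMonoidHom p : A →* A).ker := by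
  obtain ⟨m, hm⟩ := IsPGroup.iff_card.1 (hA.to_subgroup (powMonoidHom p : A →* A).ker)
  rw [hm]
  refine pow_dvd_pow p (Nat.succ_le_of_lt (lt_of_not_ge fun hm1 => hcyc ?_))
  apply isCyclic_of_isCyclic_quotient_range_powMonoidHom hA
  apply isCyclic_of_card_dvd_prime (p := p)
  rw [← index_eq_card, index_range, hm]
  exact (pow_dvd_pow p hm1).trans (pow_one p).dvd

instance characteristic_ker_powMonoidHom (A : Type*) [CommGroup A] (n : ℕ) :
    (powMonoidHom n : A →* A).ker.Characteristic :=
  characteristic_iff_le_comap.2 fun φ a (ha : a ^ n = 1) =>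
    show φ a ^ n = 1 by rw [← map_pow, ha, map_one]

theorem isCyclic_of_isMulCommutative_of_forall_card_eq_prime_sq {G : Type*} [Group G]
    [Finite G] (hG : IsPGroup p G) (N : Subgroup G) [N.Normal] [IsMulCommutative N]
    (h : ∀ E ≤ N, E.Normal → Nat.card E = p ^ 2 → IsCyclic E) : IsCyclic N := by
  by_contra hcyc
  let Ω : Subgroup G := (powMonoidHom p : N →* N).ker.map N.subtype
  have hΩp : ∀ x ∈ Ω, x ^ p = 1 := by
    rintro _ ⟨x, hx, rfl⟩
    exact congrArg Subtype.val hx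
  have hΩ : p ^ 2 ∣ Nat.card Ω := by
    rw [card_map_of_injective N.subtype_injective]
    exact prime_sq_dvd_card_ker_powMonoidHom (hG.to_subgroup N) hcyc
  obtain ⟨E, hEΩ, hE, hEcard⟩ := exists_normal_le_card_eq_prime_pow hG Ω hΩ
  have hEexp : Monoid.exponent E ∣ p :=
    Monoid.exponent_dvd_of_forall_pow_eq_one fun x => Subtype.ext (hΩp x (hEΩ x.2))
  have := h E (hEΩ.trans (map_subtype_le _)) hE hEcard
  rw [IsCyclic.exponent_eq_card, hEcard] at hEexp
  exact hp.out.not_dvd_one (Nat.dvd_of_mul_dvd_mul_left hp.out.pos (by rwa [mul_one, ← sq]))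

theorem nonempty_linearEquiv_of_natCard_eq {K V W : Type*} [DivisionRing K] [Finite K]
    [AddCommGroup V] [Module K V] [Module.Finite K V] [AddCommGroup W] [Module K W]
    [Module.Finite K W] (h : Nat.card V = Nat.card W) : Nonempty (V ≃ₗ[K] W) := by
  rw [Module.natCard_eq_pow_finrank (K := K) (V := V),
    Module.natCard_eq_pow_finrank (K := K) (V := W)] at h
  exact FiniteDimensional.nonempty_linearEquiv_of_finrank_eq
    (Nat.pow_right_injective Finite.one_lt_card h)

theorem nonempty_mulEquiv_of_forall_pow_prime_eq_one {A : Type*} [CommGroup A]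
    (hcard : Nat.card A = p ^ 2) (hA : ∀ x : A, x ^ p = 1) :
    Nonempty (A ≃* Multiplicative (ZMod p) × Multiplicative (ZMod p)) := by
  have : Module (ZMod p) (Additive A) := AddCommGroup.zmodModule fun x => hA x.toMul
  have : Finite (Additive A) := Nat.finite_of_card_ne_zero (hcard ▸ pow_ne_zero 2 hp.out.ne_zero)
  have hcard' : Nat.card (Additive A) = Nat.card (ZMod p × ZMod p) := by
    rw [Nat.card_prod, Nat.card_zmod, ← sq]
    exact hcard
  obtain ⟨e⟩ := nonempty_linearEquiv_of_natCard_eq (K := ZMod p) (V := Additive A)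
    (W := ZMod p × ZMod p) hcard'
  exact ⟨(AddEquiv.toMultiplicativeRight e.toAddEquiv).trans (MulEquiv.prodMultiplicative _ _)⟩

theorem nonempty_mulEquiv_of_card_eq_prime_sq {H : Type*} [Group H] (hH : Nat.card H = p ^ 2)
    (hcyc : ¬ IsCyclic H) :
    Nonempty (H ≃* Multiplicative (ZMod p) × Multiplicative (ZMod p)) := by
  have := IsPGroup.isMulCommutative_of_card_eq_prime_sq hH
  have hexp : Monoid.exponent H = p := (not_isCyclic_iff_exponent_eq_prime hp.out hH).1 hcyc
  exact nonempty_mulEquiv_of_forall_pow_prime_eq_one hH (hexp ▸ Monoid.pow_exponent_eq_one)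

end Commutative

section LeFrattini

variable {p : ℕ} [hp : Fact p.Prime] {G : Type*} [Group G] [Finite G]

theorem isCyclic_of_card_eq_prime_sq_of_le_map_mk' (hG : IsPGroup p G) {N : Subgroup G}
    (hNΦ : N ≤ frattini G) (h : ∀ E ≤ N, E.Normal → Nat.card E = p ^ 2 → IsCyclic E)
    {Z : Subgroup G} [Z.Normal] (hZN : Z ≤ N) (hZ : Nat.card Z = p)
    {E : Subgroup (G ⧸ Z)} [E.Normal] (hEN : E ≤ N.map (QuotientGroup.mk' Z))
    (hE : Nat.card E = p ^ 2) : IsCyclic E := by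
  let K := E.comap (QuotientGroup.mk' Z)
  have hKN : K ≤ N := comap_mk'_le hZN hEN
  have hKcard : Nat.card K = p ^ 2 * p := by rw [card_mul_card_comap_mk', hZ, hE, mul_comm]
  obtain ⟨M, hMK, hMnormal, hM⟩ := exists_normal_le_card_eq_prime_pow hG K (Dvd.intro _ hKcard.symm)
  have hMcyc : IsCyclic M := h M (hMK.trans hKN) hMnormal hM
  have hKM : Nat.card (K.map (QuotientGroup.mk' M)) = p := by
    rw [← card_mul_card_map_mk' hMK, hM] at hKcard
    exact Nat.eq_of_mul_eq_mul_left (pow_pos hp.out.pos 2) hKcard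
  have hKcomm : IsMulCommutative K := isMulCommutative_of_isCyclic_map_mk'
    ((hKN.trans hNΦ).trans (frattini_le_centralizer_of_card_dvd_prime_sq hG M hM.dvd))
    (isCyclic_of_prime_card hKM)
  have hKcyc : IsCyclic K := isCyclic_of_isMulCommutative_of_forall_card_eq_prime_sq hG K
    fun F hFK => h F (hFK.trans hKN)
  rw [← map_comap_eq_self_of_surjective (QuotientGroup.mk'_surjective Z) E]
  exact isCyclic_of_surjective _ ((QuotientGroup.mk' Z).subgroupMap_surjective K)

theorem isCyclic_of_le_frattini_of_forall_card_eq_prime_sq (hG : IsPGroup p G) (N : Subgroup G)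
    [hN : N.Normal] (hNΦ : N ≤ frattini G)
    (h : ∀ E ≤ N, E.Normal → Nat.card E = p ^ 2 → IsCyclic E) :
    IsCyclic N := by
  induction hn : Nat.card G using Nat.strong_induction_on generalizing G with
  | _ n ih =>
  rcases subsingleton_or_nontrivial N with hN1 | hN1
  · exact isCyclic_of_subsingleton
  obtain ⟨Z, hZN, hZnormal, hZ⟩ := exists_normal_le_card_eq_prime hG N
  have hcard : Nat.card (G ⧸ Z) < n := by
    rw [← hn, ← card_mul_index Z, hZ, index_eq_card]
    exact lt_mul_of_one_lt_left Nat.card_pos hp.out.one_lt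
  have hquot : IsCyclic (N.map (QuotientGroup.mk' Z)) :=
    have := hN.map _ (QuotientGroup.mk'_surjective Z)
    ih _ hcard (hG.to_quotient Z) (N.map (QuotientGroup.mk' Z))
      (map_le_iff_le_comap.2 (hNΦ.trans (frattini_le_comap_frattini_of_surjective
        (QuotientGroup.mk'_surjective Z))))
      (fun _ hEN _ hE => isCyclic_of_card_eq_prime_sq_of_le_map_mk' hG hNΦ h hZN hZ hEN hE) rfl
  have hZcyc : IsCyclic Z := isCyclic_of_prime_card hZ
  have hNcomm : IsMulCommutative N := isMulCommutative_of_isCyclic_map_mk'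
    (hNΦ.trans (frattini_le_centralizer_of_card_dvd_prime_sq hG Z
      (hZ ▸ dvd_pow_self p two_ne_zero))) hquot
  exact isCyclic_of_isMulCommutative_of_forall_card_eq_prime_sq hG N h

end LeFrattini

theorem stmt4 {p : ℕ} (hp : p.Prime) {G : Type*} [Group G] [Finite G]
    (hG : IsPGroup p G) {N : Subgroup G} (hN : N.Normal) (hNΦ : N ≤ frattini G)
    (h : ¬ ∃ H : Subgroup G, H ≤ N ∧ H.Normal ∧
      Nonempty (↥H ≃* Multiplicative (ZMod p) × Multiplicative (ZMod p))) :
    IsCyclic ↥N := by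
  have : Fact p.Prime := ⟨hp⟩
  refine isCyclic_of_le_frattini_of_forall_card_eq_prime_sq hG N hNΦ fun E hEN hE hEcard => ?_
  by_contra hcyc
  exact h ⟨E, hEN, hE, nonempty_mulEquiv_of_card_eq_prime_sq hEcard hcyc⟩
end

section
/- Let G be a finite p-group and let N be a normal subgroup of G contained in the Frattini subgroup Φ(G). If the center Z(N) of N is cyclic, then N itself is cyclic. -/
/-!
Call a subgroup invariant if it is normal in `G`. The proof rests on two facts. First, an invariant
abelian subgroup `A` is cyclic as soon as the part of it centralized by `Φ(G)` is: otherwise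
`Ω₁(A)` is not cyclic and contains a central `z` of order `p` together with some `y ∉ ⟨z⟩` that is
central modulo `⟨z⟩`; the conjugacy class of `y` has at most `p` elements, so the centralizer of `y`
has index at most `p` and contains `Φ(G)`. For `A ≤ N ≤ Φ(G)` this part lies in `Z(N)`, so if `Z(N)`
is cyclic then all invariant abelian subgroups of `N` are.

Second, if all invariant proper subgroups of `N ≤ Φ(G)` are cyclic, then `N` is abelian. A maximal
one is some `⟨a⟩`, and `N = ⟨a, y⟩`. The same index argument gives `⁅y, a⁆ ∈ R := ⟨a ^ p ^ 2⟩`, so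
`N / R` is abelian. If `N / R` is cyclic then so is `N`, because `R` is generated by a `p`-th power
of an element of `N`, hence by a non-generator. Otherwise `Ω₁(N / R)` is not cyclic, so its
preimage is not a proper subgroup of `N`; hence `a ^ p ∈ R`, which forces `a ^ p = 1`, and then `a`
is central. Induction on `N` combines the two.
-/

open Subgroup
open scoped commutatorElement

namespace FrattiniCyclicCenter

variable {p : ℕ} {G : Type*} [Group G]

section Cyclic

lemma isCyclic_map {G' : Type*} [Group G'] (f : G →* G') (H : Subgroup G) [IsCyclic H] :
    IsCyclic (H.map f) :=
  isCyclic_of_surjective (f.subgroupMap H) (f.subgroupMap_surjective H)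

variable [Fact p.Prime]

lemma mem_zpowers_zpow_of_not_dvd {b : G} {n : ℕ} (hb : b ^ p ^ n = 1) {j : ℤ}
    (hj : ¬ (p : ℤ) ∣ j) : b ∈ zpowers (b ^ j) := by
  have hcoprime : IsCoprime j ((p ^ n : ℕ) : ℤ) := by
    rw [Nat.cast_pow]
    exact ((Prime.coprime_iff_not_dvd (Nat.prime_iff_prime_int.1 Fact.out)).2 hj).symm.pow_right
  rw [mem_zpowers_zpow_iff]
  exact Int.isCoprime_iff_gcd_eq_one.1
    (hcoprime.of_isCoprime_of_dvd_right (Int.natCast_dvd_natCast.2 (orderOf_dvd_of_pow_eq_one hb)))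

lemma eq_one_of_mem_zpowers_pow (hG : IsPGroup p G) {b : G} (hb : b ∈ zpowers (b ^ p)) :
    b = 1 := by
  by_contra hne
  rw [mem_zpowers_pow_iff, Nat.gcd_eq_left (hG.dvd_orderOf hne)] at hb
  exact (Fact.out : p.Prime).ne_one hb

lemma mem_zpowers_of_pow_eq_one {H : Subgroup G} [IsCyclic H] {x y : G}
    (hxH : x ∈ H) (hyH : y ∈ H) (hx : x ^ p = 1) (hy : y ^ p = 1) (hne : x ≠ 1) :
    y ∈ zpowers x := by
  obtain ⟨g, rfl⟩ := (Subgroup.isCyclic_iff_exists_zpowers_eq_top H).1 inferInstance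
  obtain ⟨m, hm⟩ : p ∣ orderOf g := orderOf_eq_prime hx hne ▸ orderOf_dvd_of_mem_zpowers hxH
  have hgm : (g ^ m) ^ p ^ 1 = 1 := by
    rw [pow_one, ← pow_mul, mul_comm, ← hm, pow_orderOf_eq_one]
  have hp : (p : ℤ) ≠ 0 := mod_cast (Fact.out : p.Prime).ne_zero
  have exists_eq : ∀ w ∈ zpowers g, w ^ p = 1 → ∃ i : ℤ, (g ^ m) ^ i = w := by
    rintro _ ⟨i, rfl⟩ hw
    simp only [← zpow_natCast, ← zpow_mul] at hw
    rw [← orderOf_dvd_iff_zpow_eq_one, hm, mul_comm i, Nat.cast_mul] at hw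
    obtain ⟨i, rfl⟩ := (mul_dvd_mul_iff_left hp).1 hw
    exact ⟨i, by simp [zpow_mul]⟩
  obtain ⟨i, rfl⟩ := exists_eq x hxH hx
  obtain ⟨j, rfl⟩ := exists_eq y hyH hy
  have hi : ¬ (p : ℤ) ∣ i := by
    rintro ⟨i, rfl⟩
    exact hne (by rw [zpow_mul, zpow_natCast, ← pow_one p, hgm, one_zpow])
  exact zpow_mem (mem_zpowers_zpow_of_not_dvd hgm hi) j

lemma ker_powMonoidHom_le_zpowers {A : Type*} [CommGroup A] (hA : IsPGroup p A)
    [IsCyclic (powMonoidHom p : A →* A).ker] {b : A} (hb : b ≠ 1) :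
    (powMonoidHom p : A →* A).ker ≤ zpowers b := by
  intro y hy
  obtain ⟨m, hm⟩ := hA.dvd_orderOf hb
  have hpos : 0 < orderOf b := (hA.isOfFinOrder (Fact.out : p.Prime).ne_zero b).orderOf_pos
  have hpow : (b ^ m) ^ p = 1 := by rw [← pow_mul, mul_comm, ← hm, pow_orderOf_eq_one]
  have hne : b ^ m ≠ 1 := by
    refine pow_ne_one_of_lt_orderOf ?_ ?_
    · rintro rfl
      simp [hm] at hpos
    · have := (Fact.out : p.Prime).one_lt
      nlinarith
  exact zpowers_le.2 (npow_mem_zpowers b m)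
    (mem_zpowers_of_pow_eq_one (H := (powMonoidHom p : A →* A).ker) hpow hy hpow hy hne)

lemma mem_zpowers_of_pow_prime_pow_eq_one {A : Type*} [CommGroup A] (hA : IsPGroup p A)
    [IsCyclic (powMonoidHom p : A →* A).ker] {b : A} {n : ℕ} (hb : p ^ n ∣ orderOf b) {y : A}
    (hy : y ^ p ^ n = 1) : y ∈ zpowers b := by
  induction n generalizing y with
  | zero => simp_all
  | succ n ih =>
    obtain ⟨k, hk : b ^ k = y ^ p⟩ :=
      ih ((pow_dvd_pow p n.le_succ).trans hb) (by rwa [← pow_mul, ← pow_succ'])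
    have hdvd : ((p ^ n : ℕ) : ℤ) * p ∣ ((p ^ n : ℕ) : ℤ) * k := by
      rw [mul_comm _ k, ← Nat.cast_mul, ← pow_succ]
      refine (Int.natCast_dvd_natCast.2 hb).trans (orderOf_dvd_iff_zpow_eq_one.2 ?_)
      rw [zpow_mul, hk, zpow_natCast, ← pow_mul, ← pow_succ', hy]
    have hp : p.Prime := Fact.out
    obtain ⟨i, rfl⟩ := (mul_dvd_mul_iff_left (mod_cast (pow_pos hp.pos n).ne')).1 hdvd
    have hker : y * (b ^ i)⁻¹ ∈ (powMonoidHom p : A →* A).ker := by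
      rw [MonoidHom.mem_ker, powMonoidHom_apply, mul_pow, ← hk, mul_comm (p : ℤ), zpow_mul,
        zpow_natCast, inv_pow, mul_inv_cancel]
    have hne : b ≠ 1 := by
      rintro rfl
      rw [orderOf_one, Nat.dvd_one] at hb
      exact (one_lt_pow₀ hp.one_lt n.succ_ne_zero).ne' hb
    exact (mul_mem_cancel_right (inv_mem (zpow_mem (mem_zpowers b) i))).1
      (ker_powMonoidHom_le_zpowers hA hne hker)

lemma isCyclic_of_isCyclic_ker_powMonoidHom {A : Type*} [CommGroup A] [Finite A]
    (hA : IsPGroup p A) [IsCyclic (powMonoidHom p : A →* A).ker] : IsCyclic A := by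
  obtain ⟨b, hb⟩ := Monoid.exists_orderOf_eq_exponent (Monoid.ExponentExists.of_finite (G := A))
  obtain ⟨e, he⟩ := IsPGroup.iff_orderOf.1 hA b
  refine ⟨b, fun y => mem_zpowers_of_pow_prime_pow_eq_one hA he.symm.dvd ?_⟩
  rw [← he, hb, Monoid.pow_exponent_eq_one]

lemma isCyclic_of_isCyclic_map_mk_zpowers_pow (hG : IsPGroup p G) {N : Subgroup G} {a : G}
    (ha : a ∈ N) [(zpowers (a ^ p)).Normal]
    (h : IsCyclic (N.map (QuotientGroup.mk' (zpowers (a ^ p))))) :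
    IsCyclic N := by
  obtain ⟨q, hq⟩ := (Subgroup.isCyclic_iff_exists_zpowers_eq_top _).1 h
  obtain ⟨g, -, rfl⟩ := hq.le (mem_zpowers q)
  have hN : N ≤ zpowers (a ^ p) ⊔ zpowers g := by
    rw [sup_comm, ← QuotientGroup.ker_mk' (zpowers (a ^ p)), ← comap_map_eq, MonoidHom.map_zpowers,
      hq]
    exact le_comap_map _ N
  obtain ⟨_, ⟨t, rfl⟩, _, ⟨k, rfl⟩, hk : (a ^ p) ^ t * g ^ k = a⟩ :=
    mem_sup_of_normal_left.1 (hN ha)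
  have hag : a ∈ zpowers g := by
    have hpow : a ^ (1 - p * t) = g ^ k := by
      rw [sub_eq_neg_add, zpow_add, zpow_one, zpow_neg, zpow_mul, zpow_natCast,
        inv_mul_eq_iff_eq_mul, hk]
    have hndvd : ¬ (p : ℤ) ∣ 1 - p * t := by
      rw [dvd_sub_left (dvd_mul_right _ _)]
      exact (Nat.prime_iff_prime_int.1 Fact.out).not_dvd_one
    obtain ⟨n, hn⟩ := hG a
    exact zpowers_le.2 (zpow_mem (mem_zpowers g) k) (hpow ▸ mem_zpowers_zpow_of_not_dvd hn hndvd)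
  have hNg : N ≤ zpowers g :=
    hN.trans (sup_le (zpowers_le.2 (pow_mem hag p)) le_rfl)
  exact isCyclic_of_le hNg

end Cyclic

section Omega

open scoped IsMulCommutative

/-- The subgroup of elements of `A` whose `p`-th power is trivial, written `Ω₁(A)` for an abelian
`p`-group `A`. It is formed as a subgroup of the ambient group, so that its normality there can be
expressed. -/
def omegaOne (p : ℕ) (A : Subgroup G) [IsMulCommutative A] : Subgroup G :=
  (powMonoidHom p : A →* A).ker.map A.subtype

lemma mem_omegaOne {A : Subgroup G} [IsMulCommutative A] {x : G} :
    x ∈ omegaOne p A ↔ x ∈ A ∧ x ^ p = 1 := by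
  simp [omegaOne, MonoidHom.mem_ker, Subtype.ext_iff, and_comm]

instance omegaOne_normal (A : Subgroup G) [IsMulCommutative A] [hA : A.Normal] :
    (omegaOne p A).Normal where
  conj_mem x hx g := by
    rw [mem_omegaOne] at hx ⊢
    exact ⟨hA.conj_mem x hx.1 g, by rw [conj_pow, hx.2, mul_one, mul_inv_cancel]⟩

lemma isCyclic_of_isCyclic_omegaOne [Fact p.Prime] (hG : IsPGroup p G) {A : Subgroup G} [Finite A]
    [IsMulCommutative A] (h : IsCyclic (omegaOne p A)) : IsCyclic A :=
  have : IsCyclic (powMonoidHom p : A →* A).ker :=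
    ((powMonoidHom p : A →* A).ker.equivMapOfInjective A.subtype
      A.subtype_injective).isCyclic.2 h
  isCyclic_of_isCyclic_ker_powMonoidHom (hG.to_subgroup A)

end Omega

section CentralElements

lemma mk_mem_center_iff {K : Subgroup G} [K.Normal] {y : G} :
    (y : G ⧸ K) ∈ center (G ⧸ K) ↔ ∀ g : G, ⁅g, y⁆ ∈ K := by
  simp_rw [mem_center_iff, (QuotientGroup.mk_surjective (s := K)).forall,
    ← commutatorElement_eq_one_iff_mul_comm, ← QuotientGroup.eq_one_iff]
  rfl

lemma normal_zpowers_of_mem_center {z : G} (hz : z ∈ center G) : (zpowers z).Normal where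
  conj_mem x hx g := by
    rw [mem_center_iff.1 (zpowers_le.2 hz hx) g, mul_inv_cancel_right]
    exact hx

lemma normal_zpowers_pow {a : G} [ha : (zpowers a).Normal] (m : ℕ) : (zpowers (a ^ m)).Normal where
  conj_mem := by
    rintro _ ⟨i, rfl⟩ g
    obtain ⟨k, hk : a ^ k = g * a * g⁻¹⟩ := ha.conj_mem a (mem_zpowers a) g
    refine ⟨k * i, ?_⟩
    simp only [← conj_zpow, ← hk, ← zpow_natCast, ← zpow_mul]
    ring_nf

variable [Fact p.Prime] [Finite G]

lemma exists_mem_center_ne_one (hG : IsPGroup p G) {N : Subgroup G} [N.Normal] (h : N ≠ ⊥) :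
    ∃ x ∈ N, x ∈ center G ∧ x ≠ 1 := by
  have hdvd : p ∣ Nat.card N :=
    (hG.to_subgroup N).card_eq_or_dvd.resolve_left (mt Subgroup.card_eq_one.1 h)
  obtain ⟨x, hx, hne⟩ :=
    (hG.of_equiv ConjAct.toConjAct).exists_fixed_point_of_prime_dvd_card_of_fixed_point N hdvd
      (a := 1) (smul_one ·)
  refine ⟨x, x.2, mem_center_iff.2 fun g => ?_, fun h => hne (Subtype.ext h.symm)⟩
  exact mul_inv_eq_iff_eq_mul.1 (congrArg Subtype.val (hx (ConjAct.toConjAct g)))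

lemma exists_notMem_forall_commutator_mem (hG : IsPGroup p G) {K N : Subgroup G} [K.Normal]
    [hN : N.Normal] (h : ¬ N ≤ K) : ∃ y ∈ N, y ∉ K ∧ ∀ g : G, ⁅g, y⁆ ∈ K := by
  have := hN.map (QuotientGroup.mk' K) (QuotientGroup.mk'_surjective K)
  have hne : N.map (QuotientGroup.mk' K) ≠ ⊥ := by
    rwa [Ne, Subgroup.map_eq_bot_iff, QuotientGroup.ker_mk']
  obtain ⟨_, ⟨y, hyN, rfl⟩, hy, hy1⟩ := exists_mem_center_ne_one (hG.to_quotient K) hne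
  exact ⟨y, hyN, mt (QuotientGroup.eq_one_iff y).2 hy1, mk_mem_center_iff.1 hy⟩

lemma exists_normal_sup_zpowers_eq (hG : IsPGroup p G) {N : Subgroup G} [N.Normal] (h : N ≠ ⊥) :
    ∃ K < N, K.Normal ∧ ∃ y, K ⊔ zpowers y = N := by
  obtain ⟨K, ⟨hKN, hK⟩, hmax⟩ :=
    (Set.toFinite {K : Subgroup G | K < N ∧ K.Normal}).exists_maximal
      ⟨⊥, bot_lt_iff_ne_bot.2 h, inferInstance⟩
  obtain ⟨y, hyN, hyK, hy⟩ := exists_notMem_forall_commutator_mem hG hKN.not_ge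
  have hnormal : (K ⊔ zpowers y).Normal := by
    have := normal_zpowers_of_mem_center (mk_mem_center_iff.2 hy)
    have hcomap : K ⊔ zpowers y = (zpowers (y : G ⧸ K)).comap (QuotientGroup.mk' K) := by
      rw [← QuotientGroup.mk'_apply, ← MonoidHom.map_zpowers, comap_map_eq, QuotientGroup.ker_mk',
        sup_comm]
    rw [hcomap]
    infer_instance
  have hle : K ⊔ zpowers y ≤ N := sup_le hKN.le (zpowers_le.2 hyN)
  refine ⟨K, hKN, hK, y, hle.eq_of_not_lt fun hlt => hyK ?_⟩
  exact hmax ⟨hlt, hnormal⟩ le_sup_left (le_sup_right (a := K) (mem_zpowers y))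

lemma mem_center_of_pow_eq_one (hG : IsPGroup p G) {a : G} [(zpowers a).Normal] (ha : a ^ p = 1) :
    a ∈ center G := by
  rcases eq_or_ne (zpowers a) ⊥ with hbot | hbot
  · rw [zpowers_eq_bot.1 hbot]
    exact one_mem _
  obtain ⟨x, hxa, hx, hne⟩ := exists_mem_center_ne_one hG hbot
  have hxp : x ^ p = 1 := by
    obtain ⟨i, rfl⟩ := hxa
    rw [← zpow_natCast, zpow_comm, zpow_natCast, ha, one_zpow]
  exact zpowers_le.2 hx (mem_zpowers_of_pow_eq_one hxa (mem_zpowers a) hxp ha hne)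

lemma commutator_mem_zpowers_pow (hG : IsPGroup p G) {a : G} [ha : (zpowers a).Normal] (g : G) :
    ⁅g, a⁆ ∈ zpowers (a ^ p) := by
  have := normal_zpowers_pow (a := a) p
  have : (zpowers (a : G ⧸ zpowers (a ^ p))).Normal := by
    have := ha.map (QuotientGroup.mk' (zpowers (a ^ p))) (QuotientGroup.mk'_surjective _)
    rwa [MonoidHom.map_zpowers] at this
  refine mk_mem_center_iff.1 (mem_center_of_pow_eq_one (hG.to_quotient _) ?_) g
  rw [← QuotientGroup.mk_pow, QuotientGroup.eq_one_iff]
  exact mem_zpowers _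

end CentralElements

section Frattini

lemma isCoatom_of_prime_index {H : Subgroup G} (h : H.index.Prime) : IsCoatom H := by
  refine ⟨fun htop => h.ne_one (index_eq_one.2 htop), fun K hHK => ?_⟩
  have hrel : H.relIndex K ≠ 1 := fun h1 => hHK.not_ge (relIndex_eq_one.1 h1)
  rw [← relIndex_mul_index hHK.le, Nat.prime_mul_iff] at h
  exact index_eq_one.1 (h.resolve_right fun h' => hrel h'.2).2

variable [Fact p.Prime] [Finite G]

lemma frattini_le_of_index_le (hG : IsPGroup p G) {H : Subgroup G} (h : H.index ≤ p) :
    frattini G ≤ H := by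
  have hp : p.Prime := Fact.out
  obtain ⟨n, hn⟩ := hG.index H
  have hn1 : n ≤ 1 := (Nat.pow_le_pow_iff_right hp.one_lt).1 (by rwa [pow_one, ← hn])
  interval_cases n
  · rw [index_eq_one.1 hn]
    exact le_top
  · exact frattini_le_coatom (isCoatom_of_prime_index (by rwa [hn, pow_one]))

lemma index_centralizer_singleton_le {y z : G} (h : ∀ g : G, ⁅g, y⁆ ∈ zpowers z) :
    (centralizer {y}).index ≤ orderOf z := by
  have hmem : ∀ q : G ⧸ centralizer {y}, (quotientCentralizerEmbedding y q : G) ∈ zpowers z :=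
    QuotientGroup.forall_mk.2 h
  rw [index, ← Nat.card_zpowers]
  exact Nat.card_le_card_of_injective _
    ((Subtype.val_injective.comp (quotientCentralizerEmbedding y).injective).codRestrict hmem)

lemma frattini_le_centralizer (hG : IsPGroup p G) {y z : G} (hz : z ^ p = 1)
    (h : ∀ g : G, ⁅g, y⁆ ∈ zpowers z) : frattini G ≤ centralizer {y} :=
  frattini_le_of_index_le hG <| (index_centralizer_singleton_le h).trans
    (orderOf_le_of_pow_eq_one (Fact.out : p.Prime).pos hz)

lemma isCyclic_of_isCyclic_inf_centralizer_frattini (hG : IsPGroup p G) {A : Subgroup G} [A.Normal]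
    [IsMulCommutative A] (h : IsCyclic (A ⊓ centralizer (frattini G) : Subgroup G)) :
    IsCyclic A := by
  by_contra hA
  have hΩ : ¬ IsCyclic (omegaOne p A) := mt (isCyclic_of_isCyclic_omegaOne hG) hA
  have hbot : omegaOne p A ≠ ⊥ := by
    intro hbot
    rw [hbot] at hΩ
    exact hΩ inferInstance
  obtain ⟨z, hzΩ, hz, hz1⟩ := exists_mem_center_ne_one hG hbot
  have := normal_zpowers_of_mem_center hz
  obtain ⟨y, hyΩ, hyz, hy⟩ :=
    exists_notMem_forall_commutator_mem hG fun hle : omegaOne p A ≤ zpowers z =>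
      hΩ (isCyclic_of_le hle)
  rw [mem_omegaOne] at hzΩ hyΩ
  have hyΦ : y ∈ centralizer (frattini G) := fun n hn =>
    (frattini_le_centralizer hG hzΩ.2 hy hn y rfl).symm
  exact hyz (mem_zpowers_of_pow_eq_one (mem_inf.2 ⟨hzΩ.1, center_le_centralizer _ hz⟩)
    (mem_inf.2 ⟨hyΩ.1, hyΦ⟩) hzΩ.2 hyΩ.2 hz1)

lemma commutator_mem_zpowers_pow_pow_of_mem_frattini (hG : IsPGroup p G) {a n : G}
    [(zpowers a).Normal] (hn : n ∈ frattini G) : ⁅n, a⁆ ∈ zpowers ((a ^ p) ^ p) := by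
  have := normal_zpowers_pow (a := a) p
  have := normal_zpowers_pow (a := a ^ p) p
  set f := QuotientGroup.mk' (zpowers ((a ^ p) ^ p))
  have hpow : f (a ^ p) ^ p = 1 := by
    rw [← map_pow, QuotientGroup.mk'_apply, QuotientGroup.eq_one_iff]
    exact mem_zpowers _
  have hcomm : ∀ q : G ⧸ zpowers ((a ^ p) ^ p), ⁅q, f a⁆ ∈ zpowers (f (a ^ p)) := by
    intro q
    obtain ⟨g, rfl⟩ := QuotientGroup.mk'_surjective _ q
    rw [← map_commutatorElement, ← MonoidHom.map_zpowers]
    exact mem_map_of_mem f (commutator_mem_zpowers_pow hG g)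
  have hfn : f n ∈ frattini (G ⧸ zpowers ((a ^ p) ^ p)) :=
    frattini_le_comap_frattini_of_surjective (QuotientGroup.mk'_surjective _) hn
  have := frattini_le_centralizer (hG.to_quotient _) hpow hcomm hfn
  rw [← QuotientGroup.ker_mk' (zpowers ((a ^ p) ^ p)), MonoidHom.mem_ker, map_commutatorElement,
    commutatorElement_eq_one_iff_mul_comm]
  exact (this _ rfl).symm

end Frattini

section MinimalNoncyclic

lemma isMulCommutative_zpowers_sup_zpowers {a b : G} (h : a * b = b * a) :
    IsMulCommutative (zpowers a ⊔ zpowers b : Subgroup G) := by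
  rw [zpowers_eq_closure, zpowers_eq_closure, ← Subgroup.closure_union]
  apply Subgroup.isMulCommutative_closure
  rintro _ (rfl | rfl) _ (rfl | rfl) <;> simp [h]

variable [Fact p.Prime] [Finite G]

lemma isCyclic_map_mk_or_forall_pow_mem (hG : IsPGroup p G) {N R : Subgroup G} [hN : N.Normal]
    [R.Normal] (hRN : R ≤ N) [IsMulCommutative (N.map (QuotientGroup.mk' R))]
    (h : ∀ L : Subgroup G, L.Normal → L < N → IsCyclic L) :
    IsCyclic (N.map (QuotientGroup.mk' R)) ∨ ∀ x ∈ N, x ^ p ∈ R := by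
  have hsurj := QuotientGroup.mk'_surjective R
  have := hN.map _ hsurj
  set Ω := omegaOne p (N.map (QuotientGroup.mk' R))
  have hLN : Ω.comap (QuotientGroup.mk' R) ≤ N := by
    intro x hx
    have : x ∈ (N.map (QuotientGroup.mk' R)).comap (QuotientGroup.mk' R) := (mem_omegaOne.1 hx).1
    rwa [comap_map_eq_self (by rwa [QuotientGroup.ker_mk'])] at this
  rcases hLN.lt_or_eq with hlt | heq
  · left
    have := h _ inferInstance hlt
    have hΩ := isCyclic_map (QuotientGroup.mk' R) (Ω.comap (QuotientGroup.mk' R))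
    rw [map_comap_eq_self_of_surjective hsurj] at hΩ
    exact isCyclic_of_isCyclic_omegaOne (hG.to_quotient R) hΩ
  · right
    intro x hx
    rw [← heq] at hx
    exact (QuotientGroup.eq_one_iff _).1 (mem_omegaOne.1 hx).2

lemma isMulCommutative_of_forall_lt_isCyclic (hG : IsPGroup p G) {N : Subgroup G} [N.Normal]
    (hN : N ≤ frattini G) (h : ∀ L : Subgroup G, L.Normal → L < N → IsCyclic L) :
    IsMulCommutative N := by
  rcases eq_or_ne N ⊥ with rfl | hbot
  · infer_instance
  obtain ⟨K, hKN, hK, y, rfl⟩ := exists_normal_sup_zpowers_eq hG hbot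
  obtain ⟨a, rfl⟩ := (Subgroup.isCyclic_iff_exists_zpowers_eq_top K).1 (h K hK hKN)
  set N := zpowers a ⊔ zpowers y with hNdef
  have haN : a ∈ N := hKN.le (mem_zpowers a)
  have hyN : y ∈ N := le_sup_right (a := zpowers a) (mem_zpowers y)
  have := normal_zpowers_pow (a := a) p
  have := normal_zpowers_pow (a := a ^ p) p
  set f := QuotientGroup.mk' (zpowers ((a ^ p) ^ p))
  have hcomm : f a * f y = f y * f a := by
    rw [eq_comm, ← commutatorElement_eq_one_iff_mul_comm, ← map_commutatorElement,
      ← MonoidHom.mem_ker, QuotientGroup.ker_mk']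
    exact commutator_mem_zpowers_pow_pow_of_mem_frattini hG (hN hyN)
  have : IsMulCommutative (N.map f) := by
    rw [hNdef, Subgroup.map_sup, MonoidHom.map_zpowers, MonoidHom.map_zpowers]
    exact isMulCommutative_zpowers_sup_zpowers hcomm
  have hRN : zpowers ((a ^ p) ^ p) ≤ N := zpowers_le.2 (pow_mem (pow_mem haN p) p)
  rcases isCyclic_map_mk_or_forall_pow_mem hG hRN h with hcyc | hpow
  · have := isCyclic_of_isCyclic_map_mk_zpowers_pow hG (pow_mem haN p) hcyc
    infer_instance
  · have hap : a ^ p = 1 := eq_one_of_mem_zpowers_pow hG (hpow a haN)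
    have ha := mem_center_of_pow_eq_one hG hap
    exact isMulCommutative_zpowers_sup_zpowers (mem_center_iff.1 ha y).symm

lemma isCyclic_of_forall_isMulCommutative_isCyclic (hG : IsPGroup p G) {N : Subgroup G}
    (hN : N.Normal) (hNΦ : N ≤ frattini G)
    (h : ∀ A : Subgroup G, A.Normal → A ≤ N → IsMulCommutative A → IsCyclic A) : IsCyclic N := by
  induction N using WellFoundedLT.induction with
  | ind N ih =>
    refine h N hN le_rfl (isMulCommutative_of_forall_lt_isCyclic hG hNΦ fun L hL hLN => ?_)
    exact ih L hLN hL (hLN.le.trans hNΦ) fun A hA hAL => h A hA (hAL.trans hLN.le)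

end MinimalNoncyclic

lemma inf_centralizer_le_map_center {A N M : Subgroup G} (hAN : A ≤ N) (hNM : N ≤ M) :
    A ⊓ centralizer M ≤ (center N).map N.subtype := by
  rintro x ⟨hxA, hxM⟩
  refine ⟨⟨x, hAN hxA⟩, mem_center_iff.2 fun n => Subtype.ext ?_, rfl⟩
  exact hxM n (hNM n.2)

end FrattiniCyclicCenter

open FrattiniCyclicCenter

theorem stmt5 {p : ℕ} (hp : p.Prime) {G : Type*} [Group G] [Finite G]
    (hG : IsPGroup p G) {N : Subgroup G} (hN : N.Normal) (hNΦ : N ≤ frattini G)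
    (hZ : IsCyclic ↥(Subgroup.center ↥N)) :
    IsCyclic ↥N := by
  have : Fact p.Prime := ⟨hp⟩
  refine isCyclic_of_forall_isMulCommutative_isCyclic hG hN hNΦ fun A hA hAN hAcomm => ?_
  have := isCyclic_map N.subtype (center N)
  have hAΦ : IsCyclic (A ⊓ centralizer (frattini G) : Subgroup G) :=
    isCyclic_of_le (inf_centralizer_le_map_center hAN hNΦ)
  exact isCyclic_of_isCyclic_inf_centralizer_frattini hG hAΦ
end
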